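/- Let λ ∈ (0,1), β² > 0, let Φ(r) = λ·√(r² + (1−r²)²/(β² + 2(1−r²))), and let r∞ ∈ (0, λ) be the unique fixed point of Φ. For any initial condition r₀ ∈ [0,1), the sequence defined by r_{t+1} = Φ(r_t) converges to r∞; moreover the convergence is monotone: if r₀ < r∞ the sequence is strictly increasing and bounded above by r∞, and if r₀ > r∞ it is strictly decreasing and bounded below by r∞. -/

import Mathlib

/-- The pre-scaling variance `Λ²(r,K,η,σ)` of the rating update
(observation-noise standard deviation `β`). -/
noncomputable def Lam2 (β r K η σ : ℝ) : ℝ :=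
  σ ^ 2 * ((1 - K) ^ 2 + K ^ 2 + 2 * K * (1 - K) * η)
    + K ^ 2 * (β ^ 2 + 2 * (1 - η * r ^ 2))
    + 2 * K * (1 - K) * (1 - η) * r * σ
    - 2 * K ^ 2 * (1 - η) * r * σ

/-- The one-step accuracy transition function
`Ψ(r,K,η,σ) = λ[rσ(1 − K(1−η)) + K(1 − ηr²)]/√(Λ²(r,K,η,σ))`. -/
noncomputable def Psi (lam β r K η σ : ℝ) : ℝ :=
  lam * (r * σ * (1 - K * (1 - η)) + K * (1 - η * r ^ 2))
    / Real.sqrt (Lam2 β r K η σ)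

/-- The invariant one-step accuracy map
`Φ(r) = λ√(r² + (1−r²)²/(β² + 2(1−r²)))`. -/
noncomputable def Phi (lam β r : ℝ) : ℝ :=
  lam * Real.sqrt (r ^ 2 + (1 - r ^ 2) ^ 2 / (β ^ 2 + 2 * (1 - r ^ 2)))

theorem Q_anti (b x y : ℝ) (hb : 0 < b) (hxy : x < y) (hy : y ≤ 1) :
    (1 - y) ^ 2 / (b + 2 * (1 - y)) < (1 - x) ^ 2 / (b + 2 * (1 - x)) := by
  obtain ⟨u, rfl⟩ : ∃ u, y = 1 - u := ⟨1 - y, by ring⟩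
  obtain ⟨d, rfl⟩ : ∃ d, x = 1 - u - d := ⟨1 - u - x, by ring⟩
  have hu : 0 ≤ u := by linarith
  have hd : 0 < d := by linarith
  rw [div_lt_div_iff₀ (by linarith) (by linarith), ← sub_pos]
  have : (1 - (1 - u - d)) ^ 2 * (b + 2 * (1 - (1 - u)))
      - (1 - (1 - u)) ^ 2 * (b + 2 * (1 - (1 - u - d)))
      = d * (d * b + 2 * u * b + 2 * u * d + 2 * u ^ 2) := by ring
  rw [this]
  positivity

theorem P_mono (b x y : ℝ) (hb : 0 < b) (hxy : x < y) (hy : y ≤ 1) :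
    x + (1 - x) ^ 2 / (b + 2 * (1 - x)) < y + (1 - y) ^ 2 / (b + 2 * (1 - y)) := by
  obtain ⟨u, rfl⟩ : ∃ u, y = 1 - u := ⟨1 - y, by ring⟩
  obtain ⟨d, rfl⟩ : ∃ d, x = 1 - u - d := ⟨1 - u - x, by ring⟩
  have hu : 0 ≤ u := by linarith
  have hd : 0 < d := by linarith
  have h1 : (0 : ℝ) < b + 2 * u := by linarith
  have h2 : (0 : ℝ) < b + 2 * (u + d) := by linarith
  rw [← sub_pos]
  have : 1 - u + (1 - (1 - u)) ^ 2 / (b + 2 * (1 - (1 - u)))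
      - (1 - u - d + (1 - (1 - u - d)) ^ 2 / (b + 2 * (1 - (1 - u - d))))
      = d * (b ^ 2 + b * (2 * u + d) + 2 * u * (u + d)) / ((b + 2 * u) * (b + 2 * (u + d))) := by
    have e1 : 1 - (1 - u) = u := by ring
    have e2 : 1 - (1 - u - d) = u + d := by ring
    rw [e1, e2]
    field_simp
    ring
  rw [this]
  positivity

theorem arg_nonneg (β r : ℝ) (hβ : 0 < β ^ 2) (h0 : 0 ≤ r) (h1 : r ≤ 1) :
    0 ≤ r ^ 2 + (1 - r ^ 2) ^ 2 / (β ^ 2 + 2 * (1 - r ^ 2)) := by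
  have : 0 ≤ 1 - r ^ 2 := by nlinarith
  positivity

theorem Phi_nonneg (lam β r : ℝ) (hl : 0 < lam) : 0 ≤ Phi lam β r := by
  unfold Phi; positivity

theorem Phi_sq (lam β r : ℝ) (hβ : 0 < β ^ 2) (h0 : 0 ≤ r) (h1 : r ≤ 1) :
    Phi lam β r ^ 2 = lam ^ 2 * (r ^ 2 + (1 - r ^ 2) ^ 2 / (β ^ 2 + 2 * (1 - r ^ 2))) := by
  unfold Phi
  rw [mul_pow, Real.sq_sqrt (arg_nonneg β r hβ h0 h1)]

theorem Phi_lt (lam β r s : ℝ) (hl : 0 < lam) (hβ : 0 < β ^ 2) (h0 : 0 ≤ r) (hrs : r < s)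
    (h1 : s ≤ 1) : Phi lam β r < Phi lam β s := by
  unfold Phi
  apply mul_lt_mul_of_pos_left _ hl
  apply Real.sqrt_lt_sqrt (arg_nonneg β r hβ h0 (by linarith))
  exact P_mono _ _ _ hβ (by nlinarith) (by nlinarith)

theorem Phi_gap (lam β r s : ℝ) (hl : 0 < lam) (hl1 : lam < 1) (hβ : 0 < β ^ 2) (h0 : 0 ≤ r)
    (hrs : r < s) (h1 : s ≤ 1) : Phi lam β s ^ 2 - s ^ 2 < Phi lam β r ^ 2 - r ^ 2 := by
  rw [Phi_sq lam β s hβ (by linarith) h1, Phi_sq lam β r hβ h0 (by linarith)]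
  have hsq : r ^ 2 < s ^ 2 := by nlinarith
  have h := Q_anti (β ^ 2) (r ^ 2) (s ^ 2) hβ hsq (by nlinarith)
  have hl2 : 0 < lam ^ 2 := by positivity
  have hl3 : 0 < 1 - lam ^ 2 := by nlinarith
  nlinarith [mul_lt_mul_of_pos_left h hl2, mul_lt_mul_of_pos_left hsq hl3]

theorem Phi_cont (lam β r : ℝ) (hβ : 0 < β ^ 2) (h0 : 0 ≤ r) (h1 : r ≤ 1) :
    ContinuousAt (Phi lam β) r := by
  have : 0 ≤ 1 - r ^ 2 := by nlinarith
  have hne : β ^ 2 + 2 * (1 - r ^ 2) ≠ 0 := by positivity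
  unfold Phi
  fun_prop (disch := assumption)

/-- Let `λ ∈ (0,1)`, `β² > 0`, and let `r∞ ∈ (0,λ)` be the
unique fixed point of `Φ`. For any `r₀ ∈ [0,1)`, the sequence defined by
`r_{t+1} = Φ(r_t)` converges to `r∞`; moreover the convergence is monotone:
if `r₀ < r∞` the sequence is strictly increasing and bounded above by `r∞`,
and if `r₀ > r∞` it is strictly decreasing and bounded below by `r∞`. -/
theorem iterates_converge_to_fixed_point
    (lam β rinf : ℝ) (hlam0 : 0 < lam) (hlam1 : lam < 1) (hβ : 0 < β ^ 2)
    (hmem : rinf ∈ Set.Ioo 0 lam) (hfix : Phi lam β rinf = rinf)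
    (huniq : ∀ s ∈ Set.Icc (0 : ℝ) 1, Phi lam β s = s → s = rinf)
    (r0 : ℝ) (hr0 : 0 ≤ r0) (hr1 : r0 < 1)
    (r : ℕ → ℝ) (hinit : r 0 = r0) (hrec : ∀ t, r (t + 1) = Phi lam β (r t)) :
    Filter.Tendsto r Filter.atTop (nhds rinf) ∧
    (r0 < rinf → StrictMono r ∧ ∀ t, r t ≤ rinf) ∧
    (rinf < r0 → StrictAnti r ∧ ∀ t, rinf ≤ r t) := by
  obtain ⟨hm0, hm1⟩ := hmem
  have key : ∀ L, Filter.Tendsto r Filter.atTop (nhds L) → 0 ≤ L → L ≤ 1 → L = rinf := by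
    intro L hL h0 h1
    apply huniq L ⟨h0, h1⟩
    have a := (Phi_cont lam β L hβ h0 h1).tendsto.comp hL
    have b := (Filter.tendsto_add_atTop_iff_nat 1).2 hL
    refine tendsto_nhds_unique a (b.congr ?_)
    intro t
    exact hrec t
  rcases lt_trichotomy r0 rinf with h | h | h
  · have inv : ∀ t, 0 ≤ r t ∧ r t < rinf := by
      intro t
      induction t with
      | zero => rw [hinit]; exact ⟨hr0, h⟩
      | succ t ih =>
        rw [hrec]
        refine ⟨Phi_nonneg _ _ _ hlam0, ?_⟩
        have := Phi_lt lam β (r t) rinf hlam0 hβ ih.1 ih.2 (by linarith)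
        linarith
    have mono : StrictMono r := by
      apply strictMono_nat_of_lt_succ
      intro t
      rw [hrec]
      have g := Phi_gap lam β (r t) rinf hlam0 hlam1 hβ (inv t).1 (inv t).2 (by linarith)
      rw [hfix] at g
      exact lt_of_pow_lt_pow_left₀ 2 (Phi_nonneg _ _ _ hlam0) (by linarith)
    have lim := tendsto_atTop_ciSup mono.monotone
      ⟨rinf, by rintro _ ⟨t, rfl⟩; exact (inv t).2.le⟩
    have e := key _ lim (ge_of_tendsto' lim fun t => (inv t).1)
      (le_of_tendsto' lim fun t => by linarith [(inv t).2])
    rw [e] at lim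
    exact ⟨lim, fun _ => ⟨mono, fun t => (inv t).2.le⟩, fun h' => absurd h' (by linarith)⟩
  · have inv : ∀ t, r t = rinf := by
      intro t
      induction t with
      | zero => rw [hinit, h]
      | succ t ih => rw [hrec, ih, hfix]
    have e : r = fun _ => rinf := funext inv
    refine ⟨?_, fun h' => absurd h' (by linarith), fun h' => absurd h' (by linarith)⟩
    rw [e]
    exact tendsto_const_nhds
  · have step : ∀ x, rinf < x → x < 1 → Phi lam β x < x := by
      intro x hx hx1
      have g := Phi_gap lam β rinf x hlam0 hlam1 hβ hm0.le hx hx1.le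
      rw [hfix] at g
      exact lt_of_pow_lt_pow_left₀ 2 (by linarith) (by linarith)
    have inv : ∀ t, rinf < r t ∧ r t < 1 := by
      intro t
      induction t with
      | zero => rw [hinit]; exact ⟨h, hr1⟩
      | succ t ih =>
        rw [hrec]
        have := Phi_lt lam β rinf (r t) hlam0 hβ hm0.le ih.1 ih.2.le
        have := step _ ih.1 ih.2
        constructor <;> linarith
    have anti : StrictAnti r := by
      apply strictAnti_nat_of_succ_lt
      intro t
      rw [hrec]
      exact step _ (inv t).1 (inv t).2
    have lim := tendsto_atTop_ciInf anti.antitone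
      ⟨rinf, by rintro _ ⟨t, rfl⟩; exact (inv t).1.le⟩
    have e := key _ lim (ge_of_tendsto' lim fun t => by linarith [(inv t).1])
      (le_of_tendsto' lim fun t => (inv t).2.le)
    rw [e] at lim
    exact ⟨lim, fun h' => absurd h' (by linarith), fun _ => ⟨anti, fun t => (inv t).1.le⟩⟩
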